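/- arXiv:1408.6176 — 2 statements merged into one kernel-verified Lean document; each statement's English description precedes it below -/
import Mathlib

section
/- Let $n \ge 1$, let $v^1,\dots,v^p \in \mathbb{R}^n$, and let $$P := \bigl\{x \in \mathbb{R}^n : \text{there is } \lambda \in \mathbb{R}^p \text{ with } x_k = \max_{1 \le r \le p} (\lambda_r + v^r_k) \text{ for all } k \in \{1,\dots,n\}\bigr\}$$ be the tropical polytope generated by $v^1,\dots,v^p$. Let $v \in \mathbb{R}^n$. Call $v$ an *extreme point* of $P$ if $v \in P$ and, for all $x, y \in P$ such that $v$ is the coordinatewise maximum of $x$ and $y$, one has $v = x$ or $v = y$. For $i \in \{1,\dots,n\}$, let $S(v,i) := \{x \in \mathbb{R}^n : x_i - v_i \ge x_j - v_j \text{ for all } j \in \{1,\dots,n\}\}$, and call $v$ an *extreme point of $P$ of type $i$* if $v \in P$ and every $x \in P \cap S(v,i)$ is of the form $x = v + c\,(1,\dots,1)$ for some $c \in \mathbb{R}$. Then the following are equivalent: 1. $v$ is an extreme point of $P$; 2. there exists $i \in \{1,\dots,n\}$ such that $v$ is an extreme point of $P$ of type $i$; 3. there exists $i \in \{1,\dots,n\}$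 such that $v$ is a minimal element, with respect to the coordinatewise order $\le$ on $\mathbb{R}^n$, of the set $\{z \in P : z_i = v_i\}$ (in particular, $v$ belongs to this set). Moreover, for each $i \in \{1,\dots,n\}$, $v$ is an extreme point of $P$ of type $i$ if and only if $v$ is a minimal element of $\{z \in P : z_i = v_i\}$. -/
/-- The sector `S(a,i) = {x | x_i - a_i ≥ x_j - a_j for all j}`. -/
def sector {n : ℕ} (a : Fin n → ℝ) (i : Fin n) : Set (Fin n → ℝ) :=
  {x | ∀ j, x j - a j ≤ x i - a i}

/-- The tropical polytope generated by the points `vs 0, …, vs (p-1)`: the set of all `x` such that,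
for some real scalars `l r`, each coordinate `x i` is the maximum over `r` of `l r + vs r i`.
It is a subset of `ℝ^n` invariant under adding real multiples of `(1,…,1)`. -/
def tropPoly {n p : ℕ} (vs : Fin p → Fin n → ℝ) : Set (Fin n → ℝ) :=
  {x | ∃ l : Fin p → ℝ, ∀ i, IsGreatest (Set.range fun r => l r + vs r i) (x i)}

/-- `v` is an extreme point of `P`: it belongs to `P`, and it is not the coordinatewise maximum of
two points of `P` both different from `v`. -/
def IsExtremePt {n : ℕ} (P : Set (Fin n → ℝ)) (v : Fin n → ℝ) : Prop :=
  v ∈ P ∧ ∀ x ∈ P, ∀ y ∈ P, (∀ k, v k = max (x k) (y k)) → v = x ∨ v = y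

/-- `v` is an extreme point of `P` of type `i`: up to adding multiples of `(1,…,1)`, it is the only
point of `P` contained in the sector `S(v,i)`. -/
def ExtremeOfType {n : ℕ} (P : Set (Fin n → ℝ)) (v : Fin n → ℝ) (i : Fin n) : Prop :=
  v ∈ P ∧ ∀ x ∈ P ∩ sector v i, ∃ c : ℝ, ∀ k, x k = v k + c

/-!
A tropical polytope is closed under binary suprema and under translation along `𝟙 = (1,…,1)`.
Every line `x + ℝ𝟙` meets the slice `z i = v i` exactly once, and within this slice
the sector `S(v,i)` is the set of points below `v`; so being extreme of type `i` means being
minimal in the slice. If `v` is minimal in the `i`-th slice and `v = x ⊔ y`, whichever of `x`, `y`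
agrees with `v` at `i` lies in the slice below `v`, hence equals `v`. If `v` is minimal in no
slice, choose for each `i` a point of the `i`-th slice strictly below `v`: then `v` is the
supremum of these finitely many points, all different from `v`, so it is not extreme.
-/

section Order

variable {α ι : Type*}

theorem isGreatest_range_sup [LinearOrder α] {f g : ι → α} {a b : α}
    (hf : IsGreatest (Set.range f) a) (hg : IsGreatest (Set.range g) b) :
    IsGreatest (Set.range (f ⊔ g)) (a ⊔ b) := by
  refine ⟨?_, Set.forall_mem_range.2 fun i => sup_le_sup (hf.2 ⟨i, rfl⟩) (hg.2 ⟨i, rfl⟩)⟩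
  obtain ⟨⟨i, rfl⟩, hfi⟩ := hf
  obtain ⟨⟨j, rfl⟩, hgj⟩ := hg
  rcases le_total (f i) (g j) with hij | hji
  · have hj : f j ≤ g j := (hfi ⟨j, rfl⟩).trans hij
    exact ⟨j, (sup_eq_right.2 hj).trans (sup_eq_right.2 hij).symm⟩
  · have hi : g i ≤ f i := (hgj ⟨i, rfl⟩).trans hji
    exact ⟨i, (sup_eq_left.2 hi).trans (sup_eq_left.2 hji).symm⟩

theorem finset_sup'_ne_of_forall_ne [SemilatticeSup α] {P : Set α} (hP : SupClosed P) {v : α}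
    (hv : ∀ x ∈ P, ∀ y ∈ P, x ⊔ y = v → x = v ∨ y = v) {s : Finset ι} (hs : s.Nonempty)
    {z : ι → α} (hzP : ∀ i ∈ s, z i ∈ P) (hzv : ∀ i ∈ s, z i ≠ v) : s.sup' hs z ≠ v := by
  have hclosed : SupClosed (P \ {v}) := fun x hx y hy =>
    ⟨hP hx.1 hy.1, fun hxy => (hv x hx.1 y hy.1 hxy).elim hx.2 hy.2⟩
  exact (hclosed.finsetSup'_mem hs fun i hi => ⟨hzP i hi, hzv i hi⟩).2

end Order

/-- A tropical cone in `ι → ℝ`: a set closed under the max-plus operations, that is, under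
coordinatewise maximum and under adding a constant to all coordinates. -/
structure IsTropicalCone {ι : Type*} (P : Set (ι → ℝ)) : Prop where
  supClosed : SupClosed P
  add_const_mem : ∀ x ∈ P, ∀ c : ℝ, x + Function.const ι c ∈ P

section TropicalCone

variable {n : ℕ} {P : Set (Fin n → ℝ)} {v x z : Fin n → ℝ} {i : Fin n}

section TropPoly

variable {p : ℕ}

theorem supClosed_tropPoly (vs : Fin p → Fin n → ℝ) : SupClosed (tropPoly vs) := by
  rintro x ⟨l, hl⟩ y ⟨m, hm⟩
  refine ⟨l ⊔ m, fun k => ?_⟩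
  have hsup : (fun r => (l ⊔ m) r + vs r k) =
      (fun r => l r + vs r k) ⊔ fun r => m r + vs r k := funext fun _ => max_add _ _ _
  rw [hsup]
  exact isGreatest_range_sup (hl k) (hm k)

theorem add_const_mem_tropPoly {vs : Fin p → Fin n → ℝ} (hx : x ∈ tropPoly vs) (c : ℝ) :
    x + Function.const (Fin n) c ∈ tropPoly vs := by
  obtain ⟨l, hl⟩ := hx
  refine ⟨l + Function.const (Fin p) c, fun k => ?_⟩
  have hcomp : (fun r => (l + Function.const (Fin p) c) r + vs r k) =
      (· + c) ∘ fun r => l r + vs r k := funext fun _ => add_right_comm _ _ _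
  rw [hcomp, Set.range_comp]
  exact add_left_mono.map_isGreatest (hl k)

theorem isTropicalCone_tropPoly (vs : Fin p → Fin n → ℝ) : IsTropicalCone (tropPoly vs) :=
  ⟨supClosed_tropPoly vs, fun _ hx => add_const_mem_tropPoly hx⟩

end TropPoly

theorem mem_sector_iff_le (hz : z i = v i) : z ∈ sector v i ↔ z ≤ v := by
  simp only [sector, Set.mem_ofPred_eq, hz, sub_self, sub_nonpos, Pi.le_def]

theorem add_const_mem_sector (hx : x ∈ sector v i) (c : ℝ) :
    x + Function.const (Fin n) c ∈ sector v i := by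
  intro j
  simpa only [Pi.add_apply, Function.const_apply, add_sub_right_comm, add_le_add_iff_right]
    using hx j

theorem ExtremeOfType.minimal (hv : ExtremeOfType P v i) :
    Minimal (· ∈ {z | z ∈ P ∧ z i = v i}) v := by
  refine ⟨⟨hv.1, rfl⟩, fun z ⟨hzP, hzi⟩ hzv k => ?_⟩
  obtain ⟨c, hc⟩ := hv.2 z ⟨hzP, (mem_sector_iff_le hzi).2 hzv⟩
  have hc0 : c = 0 := by linarith [hc i]
  simp [hc k, hc0]

theorem ExtremeOfType.of_minimal (hP : ∀ x ∈ P, ∀ c : ℝ, x + Function.const (Fin n) c ∈ P)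
    (hv : Minimal (· ∈ {z | z ∈ P ∧ z i = v i}) v) : ExtremeOfType P v i := by
  refine ⟨hv.prop.1, fun x ⟨hxP, hx⟩ => ⟨x i - v i, fun k => ?_⟩⟩
  let z : Fin n → ℝ := x + Function.const (Fin n) (v i - x i)
  have hzi : z i = v i := add_sub_cancel _ _
  have hzv : z ≤ v := (mem_sector_iff_le hzi).1 (add_const_mem_sector hx _)
  have hzk : x k + (v i - x i) = v k := congrFun (hv.eq_of_le ⟨hP x hxP _, hzi⟩ hzv) k
  linarith

theorem extremeOfType_iff_minimal (hP : ∀ x ∈ P, ∀ c : ℝ, x + Function.const (Fin n) c ∈ P) :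
    ExtremeOfType P v i ↔ Minimal (· ∈ {z | z ∈ P ∧ z i = v i}) v :=
  ⟨ExtremeOfType.minimal, ExtremeOfType.of_minimal hP⟩

theorem IsExtremePt.of_minimal (hv : Minimal (· ∈ {z | z ∈ P ∧ z i = v i}) v) :
    IsExtremePt P v := by
  refine ⟨hv.prop.1, fun x hx y hy hxy => ?_⟩
  have hxv : x ≤ v := fun k => (le_max_left _ _).trans_eq (hxy k).symm
  have hyv : y ≤ v := fun k => (le_max_right _ _).trans_eq (hxy k).symm
  rcases max_choice (x i) (y i) with hi | hi
  · exact .inl (hv.eq_of_ge ⟨hx, ((hxy i).trans hi).symm⟩ hxv)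
  · exact .inr (hv.eq_of_ge ⟨hy, ((hxy i).trans hi).symm⟩ hyv)

theorem IsExtremePt.eq_or_eq_of_sup_eq (hv : IsExtremePt P v) :
    ∀ x ∈ P, ∀ y ∈ P, x ⊔ y = v → x = v ∨ y = v := fun x hx y hy hxy =>
  (hv.2 x hx y hy fun k => congrFun hxy.symm k).imp Eq.symm Eq.symm

theorem IsExtremePt.exists_minimal (hn : 1 ≤ n) (hP : SupClosed P) (hv : IsExtremePt P v) :
    ∃ i : Fin n, Minimal (· ∈ {z | z ∈ P ∧ z i = v i}) v := by
  by_contra! hmin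
  have hlt (i : Fin n) : ∃ z < v, z ∈ P ∧ z i = v i :=
    (not_minimal_iff_exists_lt ⟨hv.1, rfl⟩).1 (hmin i)
  choose z hzv hzP hzi using hlt
  have hne : (Finset.univ : Finset (Fin n)).Nonempty := ⟨⟨0, hn⟩, Finset.mem_univ _⟩
  have hsup : Finset.univ.sup' hne z = v :=
    le_antisymm (Finset.sup'_le hne z fun i _ => (hzv i).le) fun i =>
      (hzi i).ge.trans (Finset.le_sup' z (Finset.mem_univ i) i)
  exact finset_sup'_ne_of_forall_ne hP hv.eq_or_eq_of_sup_eq hne (fun i _ => hzP i)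
    (fun i _ => (hzv i).ne) hsup

theorem isExtremePt_iff_type_iff_minimal_general (hn : 1 ≤ n) (hP : IsTropicalCone P)
    (v : Fin n → ℝ) :
    [IsExtremePt P v,
      ∃ i : Fin n, ExtremeOfType P v i,
      ∃ i : Fin n, Minimal (· ∈ {z | z ∈ P ∧ z i = v i}) v].TFAE ∧
    ∀ i : Fin n, ExtremeOfType P v i ↔ Minimal (· ∈ {z | z ∈ P ∧ z i = v i}) v := by
  have htype (i : Fin n) : ExtremeOfType P v i ↔ Minimal (· ∈ {z | z ∈ P ∧ z i = v i}) v :=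
    extremeOfType_iff_minimal hP.add_const_mem
  refine ⟨?_, htype⟩
  tfae_have 1 → 3 := IsExtremePt.exists_minimal hn hP.supClosed
  tfae_have 3 → 1 := fun ⟨_, hmin⟩ => .of_minimal hmin
  tfae_have 2 ↔ 3 := exists_congr htype
  tfae_finish

end TropicalCone

/-- Characterization of the extreme points of a tropical polytope. `Minimal (· ∈ S) v` says that
`v ∈ S` and that `v` is minimal in `S` for the (coordinatewise) order. -/
theorem isExtremePt_iff_type_iff_minimal {n p : ℕ} (hn : 1 ≤ n) (vs : Fin p → Fin n → ℝ)
    (v : Fin n → ℝ) :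
    [IsExtremePt (tropPoly vs) v,
      ∃ i : Fin n, ExtremeOfType (tropPoly vs) v i,
      ∃ i : Fin n, Minimal (· ∈ {z | z ∈ tropPoly vs ∧ z i = v i}) v].TFAE ∧
    ∀ i : Fin n, ExtremeOfType (tropPoly vs) v i ↔
      Minimal (· ∈ {z | z ∈ tropPoly vs ∧ z i = v i}) v :=
  isExtremePt_iff_type_iff_minimal_general hn (isTropicalCone_tropPoly vs) v
end

section
/- Let $n\ge 1$. For $a\in\mathbb{R}^n$, the tropical hyperplane with apex $a$ is the set of all $x\in\mathbb{R}^n$ such that the maximum $\max_{1\le i\le n}(x_i-a_i)$ is attained for at least two indices $i$. An $n\times n$ real matrix $U$ is tropically singular if the maximum of $\sum_{i=1}^n U_{i\sigma(i)}$ over all permutations $\sigma$ of $\{1,\dots,n\}$ is attained by at least two permutations. Then points $u^1,\dots,u^n\in\mathbb{R}^n$ are all contained in a common tropical hyperplane (that is, there is $a\in\mathbb{R}^n$ such that the tropical hyperplane with apex $a$ contains every $u^j$) if and only if the $n\times n$ matrix $U$ with entries $U_{ij}:=u^j_i$ (whose columns are $u^1,\dots,u^n$) is tropically singular. -/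
/-- An `m × m` real matrix is tropically singular if the maximum over permutations `σ` of
`∑ i, U i (σ i)` is attained by at least two permutations. -/
def TropSingular {m : ℕ} (U : Matrix (Fin m) (Fin m) ℝ) : Prop :=
  ∃ σ τ : Equiv.Perm (Fin m), σ ≠ τ ∧
    (∑ i, U i (σ i)) = (∑ i, U i (τ i)) ∧
    ∀ ρ : Equiv.Perm (Fin m), (∑ i, U i (ρ i)) ≤ (∑ i, U i (σ i))

/-- The tropical hyperplane with apex `a`: the points where `max_j (x_j - a_j)` is attained
at least twice. -/
def TropHyperplane {n : ℕ} (a : Fin n → ℝ) : Set (Fin n → ℝ) :=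
  {x | ∃ i k : Fin n, i ≠ k ∧ x i - a i = x k - a k ∧ ∀ j, x j - a j ≤ x i - a i}

/-!
Suppose every `u j` lies in the hyperplane with apex `a`, and let `π` be an optimal assignment of
rows to columns. Each column `j` has a row other than `π j` at which `u j - a` is maximal; following
these rows around a cycle changes `π` into another permutation whose weight is no smaller.

Conversely, let two optimal assignments differ at column `v`, and let `A i` be the tropical cofactor
of the entry in row `i` and column `v`. Expanding along column `v`, the values `x i + A i` are the
best weights of assignments through row `i` after column `v` has been replaced by `x`. For
`x = u v` two different rows are optimal by assumption; for `x = u j` with `j ≠ v` two columns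
coincide, and exchanging their rows preserves the weight. So `-A` is an apex, as in Cramer's rule.
-/

open Equiv (Perm)

/-- The maximum of `f` exists and is attained at two or more points: the notion common to tropical
hyperplanes and tropical singularity. -/
def MaxAttainedTwice {α R : Type*} [LE R] (f : α → R) : Prop :=
  ∃ i k, i ≠ k ∧ f i = f k ∧ ∀ j, f j ≤ f i

namespace MaxAttainedTwice

variable {α β R : Type*}

theorem exists_ne_forall_le [LE R] {f : α → R} (hf : MaxAttainedTwice f) (a : α) :
    ∃ i, i ≠ a ∧ ∀ j, f j ≤ f i := by
  obtain ⟨i, k, hik, heq, hmax⟩ := hf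
  by_cases hia : i = a
  · exact ⟨k, hia ▸ hik.symm, fun j => heq ▸ hmax j⟩
  · exact ⟨i, hia, hmax⟩

theorem comp_equiv [LE R] {f : β → R} (hf : MaxAttainedTwice f) (e : α ≃ β) :
    MaxAttainedTwice (f ∘ e) := by
  obtain ⟨i, k, hik, heq, hmax⟩ := hf
  exact ⟨e.symm i, e.symm k, e.symm.injective.ne hik, by simpa using heq,
    fun j => by simpa using hmax (e j)⟩

theorem of_le_comp [PartialOrder R] {f : α → R} {g : β → R} {p : α → β}
    (hle : ∀ s, f s ≤ g (p s)) (hge : ∀ b, ∃ s, g b ≤ f s) {s t : α} (hne : p s ≠ p t)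
    (heq : f s = f t) (hmax : ∀ r, f r ≤ f s) : MaxAttainedTwice g := by
  have hub (b : β) : g b ≤ f s := by
    obtain ⟨r, hr⟩ := hge b
    exact hr.trans (hmax r)
  have hs : g (p s) = f s := (hub _).antisymm (hle s)
  have ht : g (p t) = f s := (hub _).antisymm (heq.trans_le (hle t))
  exact ⟨p s, p t, hne, hs.trans ht.symm, fun b => (hub b).trans_eq hs.symm⟩

end MaxAttainedTwice

section PeriodicPoints

variable {α : Type*} [Finite α] [Nonempty α]

theorem periodicPts_nonempty (g : α → α) : (Function.periodicPts g).Nonempty := by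
  obtain ⟨x⟩ := ‹Nonempty α›
  obtain ⟨p, q, hpq, heq⟩ := Finite.exists_ne_map_eq_of_infinite fun k : ℕ => g^[k] x
  wlog hlt : p < q generalizing p q
  · exact this q p hpq.symm heq.symm (by omega)
  refine ⟨g^[p] x, Function.mk_mem_periodicPts (Nat.sub_pos_of_lt hlt) ?_⟩
  rw [Function.IsPeriodicPt, Function.IsFixedPt, ← Function.iterate_add_apply,
    Nat.sub_add_cancel hlt.le]
  exact heq.symm

theorem exists_perm_ne_one_and_forall_eq_or_eq_self {g : α → α} (hg : ∀ x, g x ≠ x) :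
    ∃ h : Perm α, h ≠ 1 ∧ ∀ x, h x = g x ∨ h x = x := by
  classical
  let h : Perm α := Equiv.Perm.ofSubtype ((Function.bijOn_periodicPts g).equiv g)
  have h_eq {x : α} (hx : x ∈ Function.periodicPts g) : h x = g x :=
    Equiv.Perm.ofSubtype_apply_of_mem _ hx
  refine ⟨h, fun h_one => ?_, fun x => ?_⟩
  · obtain ⟨y, hy⟩ := periodicPts_nonempty g
    exact hg y (by rw [← h_eq hy, h_one, Equiv.Perm.one_apply])
  · by_cases hx : x ∈ Function.periodicPts g
    · exact .inl (h_eq hx)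
    · exact .inr (Equiv.Perm.ofSubtype_apply_of_not_mem _ hx)

end PeriodicPoints

section AssignmentWeight

variable {ι R : Type*} [Fintype ι]

/-- The weight of the assignment of row `σ j` to each column `j`, where `u j` is the `j`-th column
of a matrix: a term of its tropical determinant. -/
def assignmentWeight [AddCommMonoid R] (u : ι → ι → R) (σ : Perm ι) : R :=
  ∑ j, u j (σ j)

theorem assignmentWeight_inv [AddCommMonoid R] (u : ι → ι → R) (σ : Perm ι) :
    assignmentWeight u σ⁻¹ = ∑ i, u (σ i) i := by
  rw [assignmentWeight, ← Equiv.sum_comp σ]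
  simp

theorem assignmentWeight_sub [AddCommGroup R] (u : ι → ι → R) (a : ι → R) (σ : Perm ι) :
    assignmentWeight (fun j i => u j i - a i) σ = assignmentWeight u σ - ∑ i, a i := by
  rw [assignmentWeight, Finset.sum_sub_distrib, Equiv.sum_comp σ a, assignmentWeight]

theorem assignmentWeight_mul_swap_of_eq [AddCommMonoid R] [DecidableEq ι] {u : ι → ι → R} {v j : ι}
    (huv : u v = u j) (σ : Perm ι) :
    assignmentWeight u (σ * Equiv.swap v j) = assignmentWeight u σ := by
  have hu (k : ι) : u (Equiv.swap v j k) = u k := by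
    rw [Equiv.swap_apply_def]
    split_ifs with hkv hkj <;> simp [*]
  calc ∑ k, u k (σ (Equiv.swap v j k))
      = ∑ k, u (Equiv.swap v j k) (σ (Equiv.swap v j k)) := by simp only [hu]
    _ = ∑ k, u k (σ k) := Equiv.sum_comp (Equiv.swap v j) fun k => u k (σ k)

theorem assignmentWeight_update [AddCommMonoid R] [DecidableEq ι] (u : ι → ι → R) (v : ι)
    (x : ι → R) (σ : Perm ι) :
    assignmentWeight (Function.update u v x) σ = x (σ v) + ∑ k ∈ {v}ᶜ, u k (σ k) := by
  rw [assignmentWeight, Fintype.sum_eq_add_sum_compl v, Function.update_self]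
  congr 1
  refine Finset.sum_congr rfl fun k hk => ?_
  rw [Function.update_of_ne (by simpa using hk)]

theorem exists_ne_and_assignmentWeight_le [AddCommGroup R] [PartialOrder R]
    [IsOrderedAddMonoid R] [Nonempty ι] {u : ι → ι → R} {a : ι → R}
    (ha : ∀ j, MaxAttainedTwice fun i => u j i - a i) (π : Perm ι) :
    ∃ τ, π ≠ τ ∧ assignmentWeight u π ≤ assignmentWeight u τ := by
  choose f hf_ne hf_max using fun j => (ha j).exists_ne_forall_le (π j)
  obtain ⟨h, h_ne, hh⟩ := exists_perm_ne_one_and_forall_eq_or_eq_self (g := fun j => π⁻¹ (f j))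
    fun j hj => hf_ne j (Equiv.Perm.inv_eq_iff_eq.mp hj)
  refine ⟨π * h, fun hπ => h_ne (mul_eq_left.mp hπ.symm), ?_⟩
  rw [← sub_le_sub_iff_right (∑ i, a i), ← assignmentWeight_sub, ← assignmentWeight_sub]
  refine Finset.sum_le_sum fun j _ => ?_
  rcases hh j with hj | hj
  · simpa [hj] using hf_max j (π j)
  · simp [hj]

end AssignmentWeight

section TropCofactor

variable {ι R : Type*} [Fintype ι] [DecidableEq ι] [AddCommMonoid R] [LinearOrder R]

/-- The tropical cofactor of the entry in row `i` of column `v`: the largest weight of an assignment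
of the rows other than `i` to the columns other than `v`, encoded as a permutation `σ` with
`σ v = i` whose term at `v` is left out. -/
def tropCofactor (u : ι → ι → R) (v i : ι) : R :=
  (Finset.univ.filter fun σ : Perm ι => σ v = i).sup' ⟨Equiv.swap v i, by simp⟩
    fun σ => ∑ k ∈ {v}ᶜ, u k (σ k)

theorem sum_compl_le_tropCofactor (u : ι → ι → R) (v : ι) (σ : Perm ι) :
    ∑ k ∈ {v}ᶜ, u k (σ k) ≤ tropCofactor u v (σ v) :=
  Finset.le_sup' (fun σ : Perm ι => ∑ k ∈ {v}ᶜ, u k (σ k)) (by simp)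

theorem exists_sum_compl_eq_tropCofactor (u : ι → ι → R) (v i : ι) :
    ∃ σ : Perm ι, σ v = i ∧ ∑ k ∈ {v}ᶜ, u k (σ k) = tropCofactor u v i := by
  obtain ⟨σ, hσ, hsup⟩ := Finset.exists_mem_eq_sup'
    (s := Finset.univ.filter fun σ : Perm ι => σ v = i) ⟨Equiv.swap v i, by simp⟩
    fun σ => ∑ k ∈ {v}ᶜ, u k (σ k)
  exact ⟨σ, (Finset.mem_filter.mp hσ).2, hsup.symm⟩

theorem maxAttainedTwice_add_tropCofactor [IsOrderedAddMonoid R] {u : ι → ι → R} {v : ι}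
    {x : ι → R} {π τ : Perm ι} (hne : π v ≠ τ v)
    (heq : assignmentWeight (Function.update u v x) π = assignmentWeight (Function.update u v x) τ)
    (hmax : ∀ ρ, assignmentWeight (Function.update u v x) ρ ≤
      assignmentWeight (Function.update u v x) π) :
    MaxAttainedTwice fun i => x i + tropCofactor u v i := by
  refine .of_le_comp (p := fun σ : Perm ι => σ v) (fun σ => ?_) (fun i => ?_) hne heq hmax
  · rw [assignmentWeight_update]
    gcongr
    exact sum_compl_le_tropCofactor u v σ
  · obtain ⟨σ, rfl, hσ⟩ := exists_sum_compl_eq_tropCofactor u v i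
    exact ⟨σ, by rw [assignmentWeight_update, hσ]⟩

end TropCofactor

section CommonApex

variable {ι R : Type*} [Fintype ι] [AddCommGroup R] [LinearOrder R] [IsOrderedAddMonoid R]
  {u : ι → ι → R}

theorem maxAttainedTwice_assignmentWeight_of_forall_sub [Nonempty ι] {a : ι → R}
    (ha : ∀ j, MaxAttainedTwice fun i => u j i - a i) :
    MaxAttainedTwice (assignmentWeight u) := by
  obtain ⟨π, hπ⟩ := Finite.exists_max (assignmentWeight u)
  obtain ⟨τ, hne, hle⟩ := exists_ne_and_assignmentWeight_le ha π
  exact ⟨π, τ, hne, hle.antisymm (hπ τ), hπ⟩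

theorem exists_forall_maxAttainedTwice_sub (hu : MaxAttainedTwice (assignmentWeight u)) :
    ∃ a : ι → R, ∀ j, MaxAttainedTwice fun i => u j i - a i := by
  classical
  obtain ⟨π, τ, hne, heq, hmax⟩ := hu
  obtain ⟨v, hv⟩ := DFunLike.exists_ne hne
  refine ⟨fun i => -tropCofactor u v i, fun j => ?_⟩
  simp only [sub_neg_eq_add]
  rcases eq_or_ne j v with rfl | hj
  · exact maxAttainedTwice_add_tropCofactor hv (by simpa using heq) (by simpa using hmax)
  · obtain ⟨ρ, hρ⟩ := Finite.exists_max (assignmentWeight (Function.update u v (u j)))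
    have hcol : Function.update u v (u j) v = Function.update u v (u j) j := by simp [hj]
    refine maxAttainedTwice_add_tropCofactor (τ := ρ * Equiv.swap v j) ?_
      (assignmentWeight_mul_swap_of_eq hcol ρ).symm hρ
    simpa using hj.symm

theorem mem_tropHyperplane_iff_tropSingular_general [Nonempty ι] (u : ι → ι → R) :
    (∃ a : ι → R, ∀ j, MaxAttainedTwice fun i => u j i - a i) ↔
      MaxAttainedTwice fun σ : Perm ι => ∑ i, u (σ i) i := by
  simp only [← assignmentWeight_inv]
  constructor
  · rintro ⟨a, ha⟩
    exact (maxAttainedTwice_assignmentWeight_of_forall_sub ha).comp_equiv (Equiv.inv (Perm ι))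
  · intro h
    have hu := h.comp_equiv (Equiv.inv (Perm ι))
    exact exists_forall_maxAttainedTwice_sub (by simpa [Function.comp_def] using hu)

end CommonApex

/-- For `n ≥ 1`, the points `u 0, …, u (n-1)` of `ℝ^n` lie in a common tropical hyperplane
iff the `n × n` matrix whose columns are these points is tropically singular. -/
theorem mem_tropHyperplane_iff_tropSingular {n : ℕ} (hn : 1 ≤ n) (u : Fin n → Fin n → ℝ) :
    (∃ a : Fin n → ℝ, ∀ j : Fin n, u j ∈ TropHyperplane a) ↔
      TropSingular (Matrix.of fun i j : Fin n => u j i) :=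
  have : Nonempty (Fin n) := ⟨⟨0, hn⟩⟩
  mem_tropHyperplane_iff_tropSingular_general u
end
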